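/- There exists exactly one stream y : Stream' ℕ satisfying y = (SCons 0 (SCons 1 y)) ⊕ (SCons 0 y), where ⊕ is pointwise addition of streams; moreover this unique stream is the stream of Fibonacci numbers: y.get n = Nat.fib n for all n (hence it coincides with the unique solution of x = SCons 0 ((SCons 1 x) ⊕ x)). -/

import Mathlib

open Stream'

/-- Pointwise addition of streams. -/
def sadd (xs ys : Stream' ℕ) : Stream' ℕ := fun n => xs.get n + ys.get n

infixl:65 " ⊕ " => sadd

theorem sadd_fib_aux (y : Stream' ℕ)
    (h : y = sadd (Stream'.cons 0 (Stream'.cons 1 y)) (Stream'.cons 0 y)) :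
    ∀ n, y.get n = Nat.fib n := by
  have key : ∀ n, y.get n =
      (Stream'.cons 0 (Stream'.cons 1 y)).get n + (Stream'.cons 0 y).get n :=
    fun n => congrArg (fun s : Stream' ℕ => s.get n) h
  have h0 : y.get 0 = 0 := key 0
  have h1 : y.get 1 = 1 + y.get 0 := key 1
  have h2 : ∀ n, y.get (n + 2) = y.get n + y.get (n + 1) := fun n => key (n + 2)
  intro n
  induction n using Nat.twoStepInduction with
  | zero => simpa using h0
  | one => rw [h1, h0]; rfl
  | more n ih1 ih2 => rw [h2, ih1, ih2, Nat.fib_add_two]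

theorem stmt_5 :
    (∃! y : Stream' ℕ, y = (Stream'.cons 0 (Stream'.cons 1 y)) ⊕ (Stream'.cons 0 y)) ∧
    (∀ y : Stream' ℕ, y = (Stream'.cons 0 (Stream'.cons 1 y)) ⊕ (Stream'.cons 0 y) →
      ∀ n, y.get n = Nat.fib n) := by
  refine ⟨⟨fun n => Nat.fib n, ?_, ?_⟩, sadd_fib_aux⟩
  · funext n
    match n with
    | 0 => rfl
    | 1 => rfl
    | n + 2 => exact Nat.fib_add_two
  · intro y hy
    funext n
    exact sadd_fib_aux y hy n
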